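/- arXiv:2410.20262 — 4 statements merged into one kernel-verified Lean document; each statement's English description precedes it below -/
import Mathlib

section
/- Let p be an odd prime. The univariate polynomial B(t) = b_p(t,−t) ∈ 𝔽_p[t] has degree exactly (p²−1)/2, and its constant coefficient equals 1; in particular the constant coefficient is nonzero, so 0 is not a root of B. -/
open Polynomial

/-- `bp p` is the coefficient of `x^(2A)` in `((x-1)^2 (x-t1)(x-t2))^A`, where
`A = (p^2-1)/4`, viewed as a polynomial in `x` over the polynomial ring in two
variables over `ZMod p`. -/
noncomputable def bp (p : ℕ) : MvPolynomial (Fin 2) (ZMod p) :=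
  ((((X : Polynomial (MvPolynomial (Fin 2) (ZMod p))) - 1) ^ 2 *
      (X - C (MvPolynomial.X 0)) * (X - C (MvPolynomial.X 1))) ^ ((p ^ 2 - 1) / 4)).coeff
    (2 * ((p ^ 2 - 1) / 4))

/-- `Bp p` is the univariate polynomial `B(t) = b_p(t, -t)` over `ZMod p`. -/
noncomputable def Bp (p : ℕ) : Polynomial (ZMod p) :=
  MvPolynomial.aeval ![(X : Polynomial (ZMod p)), -X] (bp p)

/-!
Putting `t₁ = t`, `t₂ = -t` turns `((x-1)²(x-t₁)(x-t₂))^A` into `(x-1)^(2A) (x²-t²)^A`. Expanding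
the second factor, the coefficient of `x^(2A)` is
`∑ k ≤ A, (-1)^k (A choose k) (2A choose 2k) t^(2k)`, whose extreme coefficients are `1` and
`(-1)^A`. As `4 ∣ p² - 1`, its degree `2A` is `(p² - 1) / 2`.
-/

theorem coeff_mul_X_pow_add_C_pow {R : Type*} [CommSemiring R] (f : R[X]) (b : R) (m n : ℕ) :
    (f * (X ^ m + C b) ^ n).coeff (m * n) =
      ∑ k ∈ Finset.range (n + 1), f.coeff (m * k) * (b ^ k * n.choose k) := by
  rw [add_comm (X ^ m), add_pow, Finset.mul_sum, finsetSum_coeff]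
  refine Finset.sum_congr rfl fun k hk => ?_
  obtain ⟨j, rfl⟩ := Nat.exists_eq_add_of_le (Finset.mem_range_succ_iff.mp hk)
  have term_eq : f * (C b ^ k * (X ^ m) ^ (k + j - k) * ((k + j).choose k : R[X])) =
      f * C (b ^ k * (k + j).choose k) * X ^ (m * j) := by
    rw [Nat.add_sub_cancel_left, ← pow_mul, C_mul, C_pow, C_eq_natCast]
    ring
  rw [term_eq, mul_add, coeff_mul_X_pow, coeff_mul_C]

section ChooseMulChoose

variable {R : Type*} [Ring R]

theorem coeff_X_sub_one_pow_two_mul_two_mul (n k : ℕ) :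
    ((X - 1 : R[X]) ^ (2 * n)).coeff (2 * k) = (2 * n).choose (2 * k) := by
  rw [sub_eq_add_neg, ← C_1, ← C_neg, coeff_X_add_C_pow, ← Nat.mul_sub,
    (even_two_mul _).neg_one_pow, one_mul]

/-- The polynomial `∑ k ≤ n, (-1)^k (n choose k) (2n choose 2k) X^k`, whose value at `t²` is
`b_p(t, -t)` when `n = (p² - 1) / 4`. -/
noncomputable def chooseMulChoosePoly (R : Type*) [Ring R] (n : ℕ) : R[X] :=
  ∑ k ∈ Finset.range (n + 1), C ((-1) ^ k * n.choose k * (2 * n).choose (2 * k) : R) * X ^ k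

theorem coeff_chooseMulChoosePoly (n k : ℕ) :
    (chooseMulChoosePoly R n).coeff k = (-1) ^ k * n.choose k * (2 * n).choose (2 * k) := by
  simp only [chooseMulChoosePoly, finsetSum_coeff, coeff_C_mul_X_pow, Finset.sum_ite_eq,
    Finset.mem_range, ite_eq_left_iff, not_lt]
  intro hk
  simp [Nat.choose_eq_zero_of_lt hk]

theorem natDegree_chooseMulChoosePoly [Nontrivial R] (n : ℕ) :
    (chooseMulChoosePoly R n).natDegree = n := by
  refine natDegree_eq_of_le_of_coeff_ne_zero (natDegree_le_iff_coeff_eq_zero.mpr fun k hk => ?_) ?_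
  · simp [coeff_chooseMulChoosePoly, Nat.choose_eq_zero_of_lt hk]
  · simpa [coeff_chooseMulChoosePoly] using (isUnit_one.neg.pow n : IsUnit ((-1 : R) ^ n)).ne_zero

end ChooseMulChoose

theorem coeff_two_mul_eq_aeval_chooseMulChoosePoly (R : Type*) {S : Type*} [CommRing R] [CommRing S]
    [Algebra R S] (a : S) (n : ℕ) :
    (((X - 1) ^ 2 * (X - C a) * (X - C (-a))) ^ n).coeff (2 * n) =
      aeval (a ^ 2) (chooseMulChoosePoly R n) := by
  have factor_eq : ((X - 1) ^ 2 * (X - C a) * (X - C (-a))) ^ n =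
      (X - 1) ^ (2 * n) * (X ^ 2 + C (-a ^ 2)) ^ n := by
    rw [pow_mul, ← mul_pow, C_neg, C_neg, C_pow]
    ring
  rw [factor_eq, coeff_mul_X_pow_add_C_pow, chooseMulChoosePoly, map_sum]
  refine Finset.sum_congr rfl fun k _ => ?_
  rw [coeff_X_sub_one_pow_two_mul_two_mul, neg_pow]
  simp only [map_mul, map_pow, map_neg, map_one, map_natCast, aeval_X]
  ring

theorem aeval_bp {p : ℕ} {S : Type*} [CommRing S] [Algebra (ZMod p) S] (t : Fin 2 → S) :
    MvPolynomial.aeval t (bp p) =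
      (((X - 1) ^ 2 * (X - C (t 0)) * (X - C (t 1))) ^ ((p ^ 2 - 1) / 4)).coeff
        (2 * ((p ^ 2 - 1) / 4)) := by
  rw [bp, ← AlgHom.coe_toRingHom, ← coeff_map]
  simp

theorem Bp_eq_expand (p : ℕ) :
    Bp p = expand (ZMod p) 2 (chooseMulChoosePoly (ZMod p) ((p ^ 2 - 1) / 4)) :=
  (aeval_bp _).trans (coeff_two_mul_eq_aeval_chooseMulChoosePoly (ZMod p) X _)

theorem two_mul_sq_sub_one_div_four {m : ℕ} (hm : Odd m) :
    2 * ((m ^ 2 - 1) / 4) = (m ^ 2 - 1) / 2 := by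
  have := Nat.eight_dvd_sq_sub_one_of_odd hm
  omega

theorem natDegree_Bp {p : ℕ} [Fact (1 < p)] (hodd : Odd p) :
    (Bp p).natDegree = (p ^ 2 - 1) / 2 := by
  rw [Bp_eq_expand, natDegree_expand, natDegree_chooseMulChoosePoly, mul_comm,
    two_mul_sq_sub_one_div_four hodd]

theorem coeff_zero_Bp (p : ℕ) : (Bp p).coeff 0 = 1 := by
  rw [Bp_eq_expand, coeff_expand two_pos]
  simp [coeff_chooseMulChoosePoly]

theorem stmt5_general (p : ℕ) [Fact (1 < p)] (hodd : p % 2 = 1) :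
    (Bp p).degree = (((p ^ 2 - 1) / 2 : ℕ) : WithBot ℕ) ∧
    (Bp p).coeff 0 = 1 ∧ (Bp p).coeff 0 ≠ 0 ∧ ¬ (Bp p).IsRoot 0 := by
  have coeff_ne_zero : (Bp p).coeff 0 ≠ 0 := coeff_zero_Bp p ▸ one_ne_zero
  have Bp_ne_zero : Bp p ≠ 0 := fun h => coeff_ne_zero (h ▸ coeff_zero 0)
  have degree_eq : (Bp p).degree = ((p ^ 2 - 1) / 2 : ℕ) :=
    (degree_eq_iff_natDegree_eq Bp_ne_zero).mpr (natDegree_Bp (Nat.odd_iff.mpr hodd))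
  exact ⟨degree_eq, coeff_zero_Bp p, coeff_ne_zero,
    zero_isRoot_iff_coeff_zero_eq_zero.not.mpr coeff_ne_zero⟩

theorem stmt5 (p : ℕ) [Fact p.Prime] (hodd : p % 2 = 1) :
    (Bp p).degree = (((p ^ 2 - 1) / 2 : ℕ) : WithBot ℕ) ∧
    (Bp p).coeff 0 = 1 ∧ (Bp p).coeff 0 ≠ 0 ∧ ¬ (Bp p).IsRoot 0 :=
  stmt5_general p hodd
end

section
/- For every integer A ≥ 1, let b(t₁,t₂) ∈ ℤ[t₁,t₂] be the coefficient of x^{2A} in ((x−1)²(x−t₁)(x−t₂))^A, viewed as a polynomial in x with coefficients in ℤ[t₁,t₂]. Then the coefficient of t² in the univariate polynomial b(t,−t) ∈ ℤ[t] equals −A²(2A−1). -/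
open Polynomial

/-- `bZ A` is the coefficient of `x^(2A)` in `((x-1)^2 (x-t1)(x-t2))^A` over `ℤ[t1,t2]`. -/
noncomputable def bZ (A : ℕ) : MvPolynomial (Fin 2) ℤ :=
  ((((X : Polynomial (MvPolynomial (Fin 2) ℤ)) - 1) ^ 2 *
      (X - C (MvPolynomial.X 0)) * (X - C (MvPolynomial.X 1))) ^ A).coeff (2 * A)

/-!
At `t₁ = t`, `t₂ = -t` the polynomial in `x` is `(x - 1) ^ (2A) * (x² - t²) ^ A`. Expanding the
second factor, the term `(A choose j) * (-t²) ^ j * x ^ (2A - 2j)` picks out the coefficient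
`2A choose 2j` of `x ^ (2j)` in `(x - 1) ^ (2A)`. Hence
`b(t, -t) = ∑ j, (-1) ^ j * (A choose j) * (2A choose 2j) * t ^ (2j)`,
and the term `j = 1` is `-A * (2A choose 2) * t²`.
-/

section CommRing

variable {R : Type*} [CommRing R]

theorem coeff_mul_X_pow_sub_C_pow (p : R[X]) (a : R) (d n : ℕ) :
    (p * (X ^ d - C a) ^ n).coeff (d * n) =
      ∑ j ∈ Finset.range (n + 1), (n.choose j : R) * p.coeff (d * j) * (-a) ^ j := by
  have hexpand : p * (X ^ d - C a) ^ n =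
      ∑ j ∈ Finset.range (n + 1), C ((n.choose j : R) * (-a) ^ j) * (p * X ^ (d * (n - j))) := by
    rw [sub_eq_neg_add, add_pow, Finset.mul_sum]
    refine Finset.sum_congr rfl fun j _ => ?_
    simp only [map_mul, map_pow, map_neg, map_natCast]
    ring
  rw [hexpand, finsetSum_coeff]
  refine Finset.sum_congr rfl fun j hj => ?_
  have hdegree : d * n = d * j + d * (n - j) := by
    rw [← mul_add, Nat.add_sub_cancel' (Finset.mem_range_succ_iff.mp hj)]
  rw [coeff_C_mul, hdegree, coeff_mul_X_pow]
  ring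

theorem coeff_X_sub_one_pow_two_mul (n j : ℕ) :
    (((X : R[X]) - 1) ^ (2 * n)).coeff (2 * j) = ((2 * n).choose (2 * j) : R) := by
  rw [sub_eq_add_neg, ← C_1, ← C_neg, coeff_X_add_C_pow, ← Nat.mul_sub, pow_mul, neg_one_sq,
    one_pow, one_mul]

-- The `ℤ`-algebra structure is arbitrary because the one that instance search finds on a
-- polynomial ring does not unify with `Ring.toIntAlgebra` during rewriting.
theorem aeval_bZ [Algebra ℤ R] (A : ℕ) (s t : R) :
    MvPolynomial.aeval ![s, t] (bZ A) =
      ((((X : R[X]) - 1) ^ 2 * (X - C s) * (X - C t)) ^ A).coeff (2 * A) := by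
  rw [bZ, ← AlgHom.coe_toRingHom, ← coeff_map]
  simp

theorem aeval_bZ_self_neg [Algebra ℤ R] (A : ℕ) (t : R) :
    MvPolynomial.aeval ![t, -t] (bZ A) =
      ∑ j ∈ Finset.range (A + 1),
        (A.choose j : R) * ((2 * A).choose (2 * j) : R) * (-t ^ 2) ^ j := by
  have hfactor : (((X : R[X]) - 1) ^ 2 * (X - C t) * (X - C (-t))) ^ A =
      (X - 1) ^ (2 * A) * (X ^ 2 - C (t ^ 2)) ^ A := by
    rw [pow_mul, ← mul_pow, C_neg, C_pow]
    ring
  simp only [aeval_bZ, hfactor, coeff_mul_X_pow_sub_C_pow, coeff_X_sub_one_pow_two_mul]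

theorem coeff_two_mul_aeval_bZ_X_neg_X (A j : ℕ) :
    (MvPolynomial.aeval ![(X : R[X]), -X] (bZ A)).coeff (2 * j) =
      (-1) ^ j * (A.choose j : R) * ((2 * A).choose (2 * j) : R) := by
  have hterm (i : ℕ) : (A.choose i : R[X]) * ((2 * A).choose (2 * i) : R[X]) * (-X ^ 2) ^ i =
      C ((-1) ^ i * (A.choose i : R) * ((2 * A).choose (2 * i) : R)) * X ^ (2 * i) := by
    rw [neg_pow, ← pow_mul]
    simp only [map_mul, map_pow, map_neg, map_one, map_natCast]
    ring
  simp only [aeval_bZ_self_neg, hterm, finsetSum_coeff, coeff_C_mul_X_pow,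
    Nat.mul_right_inj two_ne_zero, Finset.sum_ite_eq, Finset.mem_range_succ_iff]
  rw [ite_eq_left_iff]
  intro hj
  rw [Nat.choose_eq_zero_of_lt (not_le.mp hj), Nat.cast_zero, mul_zero, zero_mul]

end CommRing

theorem choose_two_mul_two (n : ℕ) : (2 * n).choose 2 = n * (2 * n - 1) := by
  rw [Nat.choose_two_right, mul_assoc, Nat.mul_div_cancel_left _ two_pos]

theorem stmt7 (A : ℕ) (hA : 1 ≤ A) :
    (MvPolynomial.aeval ![(X : Polynomial ℤ), -X] (bZ A)).coeff 2
      = -(A : ℤ) ^ 2 * (2 * (A : ℤ) - 1) := by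
  calc (MvPolynomial.aeval ![(X : Polynomial ℤ), -X] (bZ A)).coeff 2
      = (-1) ^ 1 * (A.choose 1 : ℤ) * ((2 * A).choose 2 : ℤ) :=
        coeff_two_mul_aeval_bZ_X_neg_X A 1
    _ = -(A : ℤ) * (A * (2 * A - 1)) := by
        rw [choose_two_mul_two, Nat.choose_one_right]
        push_cast [Nat.cast_sub (show 1 ≤ 2 * A by omega)]
        ring
    _ = -(A : ℤ) ^ 2 * (2 * (A : ℤ) - 1) := by ring
end

section
/- Let p be a prime with p ≡ 3 (mod 4). Then the polynomial B(t) = b_p(t,−t) ∈ 𝔽_p[t] has a root t₀ in the algebraic closure of 𝔽_p with t₀ ≠ 0, t₀ ≠ 1, and t₀ ≠ −1. -/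
open Polynomial

/-!
On the line `t₂ = -t₁` the polynomial under the coefficient is `(x² - t²)^A (x - 1)^(2A)`, so that
`B(t) = P(t²)` with `P(s) = ∑ₘ (-1)^m (A choose m) (2A choose 2m) s^m`. Here `P` has degree `A`,
leading coefficient `(-1)^A` and `P(0) = 1`, so it suffices to find a root of `P` other than `1`.
If `1` were the only root, then `P(s) = (1 - s)^A`, and comparing the coefficients of `s` gives
`A (A - 1) (2A + 1) = 0`. But `4A + 1 = p²` vanishes in characteristic `p`, so that
`32 A (A - 1) (2A + 1) = 5`, which is nonzero for `p ≠ 5`.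
-/

/-- The polynomial `P` with `b_p(t, -t) = P(t²)` for `A = (p² - 1) / 4` (see `aeval_Bp`). It is the
terminating hypergeometric series `₃F₂(-A, -A, 1/2 - A; 1/2, 1; s)`, written with binomial
coefficients so that it makes sense over every commutative ring. -/
noncomputable def antidiagonalPoly (R : Type*) [CommRing R] (A : ℕ) : R[X] :=
  ∑ m ∈ Finset.range (A + 1), C ((-1) ^ m * (A.choose m : R) * ((2 * A).choose (2 * m) : R)) * X ^ m

section CommRing

variable {R : Type*} [CommRing R]

lemma coeff_X_sub_C_pow (r : R) (n k : ℕ) :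
    ((X - C r) ^ n).coeff k = (-r) ^ (n - k) * (n.choose k : R) := by
  rw [sub_eq_add_neg, ← C_neg, coeff_X_add_C_pow]

lemma coeff_antidiagonalPoly (A k : ℕ) :
    (antidiagonalPoly R A).coeff k =
      (-1) ^ k * (A.choose k : R) * ((2 * A).choose (2 * k) : R) := by
  simp only [antidiagonalPoly, finsetSum_coeff, coeff_C_mul_X_pow, Finset.sum_ite_eq]
  split_ifs with hk
  · rfl
  · simp [Nat.choose_eq_zero_of_lt (show A < k by simpa using hk)]

lemma eval_zero_antidiagonalPoly (A : ℕ) : (antidiagonalPoly R A).eval 0 = 1 := by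
  simp [← coeff_zero_eq_eval_zero, coeff_antidiagonalPoly]

lemma natDegree_antidiagonalPoly [Nontrivial R] (A : ℕ) : (antidiagonalPoly R A).natDegree = A := by
  refine natDegree_eq_of_le_of_coeff_ne_zero ?_ ?_
  · refine natDegree_le_iff_coeff_eq_zero.2 fun k hk => ?_
    simp [coeff_antidiagonalPoly, Nat.choose_eq_zero_of_lt hk]
  · simpa [coeff_antidiagonalPoly] using ((isUnit_one (M := R)).neg.pow A).ne_zero

lemma leadingCoeff_antidiagonalPoly [Nontrivial R] (A : ℕ) :
    (antidiagonalPoly R A).leadingCoeff = (-1) ^ A := by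
  simp [leadingCoeff, natDegree_antidiagonalPoly, coeff_antidiagonalPoly]

lemma coeff_X_sq_sub_C_pow_mul_X_sub_one_pow (s : R) (A : ℕ) :
    (((X : R[X]) ^ 2 - C s) ^ A * (X - 1) ^ (2 * A)).coeff (2 * A) =
      (antidiagonalPoly R A).eval s := by
  rw [sub_eq_neg_add, ← C_neg, add_pow, Finset.sum_mul, finsetSum_coeff, antidiagonalPoly,
    eval_finsetSum]
  refine Finset.sum_congr rfl fun m hm => ?_
  have hmA : m ≤ A := Nat.lt_succ_iff.1 (Finset.mem_range.1 hm)
  have hterm : C (-s) ^ m * ((X : R[X]) ^ 2) ^ (A - m) * (A.choose m : R[X]) * (X - 1) ^ (2 * A) =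
      C ((-s) ^ m * (A.choose m : R)) * ((X - C 1) ^ (2 * A) * X ^ (2 * (A - m))) := by
    simp only [map_mul, map_pow, map_natCast, map_one, pow_mul]
    ring
  have hshift : 2 * A - 2 * (A - m) = 2 * m := by omega
  have hsign : (-1 : R) ^ (2 * A - 2 * m) = 1 := Even.neg_one_pow ⟨A - m, by omega⟩
  rw [hterm, coeff_C_mul, coeff_mul_X_pow', if_pos (by omega), hshift, coeff_X_sub_C_pow, hsign,
    eval_C_mul, eval_pow, eval_X, neg_pow s]
  ring

lemma aeval_Bp (p : ℕ) [Algebra (ZMod p) R] (t : R) :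
    aeval t (Bp p) = (antidiagonalPoly R ((p ^ 2 - 1) / 4)).eval (t ^ 2) := by
  let φ : MvPolynomial (Fin 2) (ZMod p) →ₐ[ZMod p] R := MvPolynomial.aeval ![t, -t]
  have hφ : (aeval t).comp (MvPolynomial.aeval ![X, -X]) = φ := by
    ext i
    fin_cases i <;> simp [φ]
  have hφ_bp : aeval t (Bp p) = φ (bp p) := by rw [← hφ]; rfl
  have hfactor : ((X : R[X]) - 1) ^ 2 * (X - C t) * (X - C (-t)) =
      (X ^ 2 - C (t ^ 2)) * (X - 1) ^ 2 := by
    rw [C_neg, C_pow]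
    ring
  rw [hφ_bp, bp, ← AlgHom.coe_toRingHom φ, ← coeff_map]
  simp only [Polynomial.map_pow, Polynomial.map_mul, Polynomial.map_sub, map_X, Polynomial.map_one,
    map_C, AlgHom.coe_toRingHom]
  rw [show φ (MvPolynomial.X 0) = t by simp [φ], show φ (MvPolynomial.X 1) = -t by simp [φ],
    hfactor, mul_pow, ← pow_mul, coeff_X_sq_sub_C_pow_mul_X_sub_one_pow]

end CommRing

section IsDomain

variable {R : Type*} [CommRing R] [IsDomain R]

lemma eq_C_leadingCoeff_mul_X_sub_C_pow {f : R[X]} (hf : f.Splits) {a : R}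
    (ha : ∀ r ∈ f.roots, r = a) : f = C f.leadingCoeff * (X - C a) ^ f.natDegree := by
  have hroots : f.roots = Multiset.replicate f.natDegree a :=
    Multiset.eq_replicate.2 ⟨hf.natDegree_eq_card_roots.symm, ha⟩
  conv_lhs => rw [hf.eq_prod_roots, hroots, Multiset.map_replicate, Multiset.prod_replicate]

lemma exists_mem_roots_antidiagonalPoly_ne_one {A : ℕ} (hsplits : (antidiagonalPoly R A).Splits)
    (hA : (A : R) * (A - 1) * (2 * A + 1) ≠ 0) : ∃ s ∈ (antidiagonalPoly R A).roots, s ≠ 1 := by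
  by_contra! hone
  have hpow := eq_C_leadingCoeff_mul_X_sub_C_pow hsplits hone
  rw [leadingCoeff_antidiagonalPoly, natDegree_antidiagonalPoly] at hpow
  obtain ⟨n, rfl⟩ : ∃ n, A = n + 1 := Nat.exists_eq_add_one_of_ne_zero (by rintro rfl; simp at hA)
  have hchoose : (2 * (n + 1)).choose (2 * 1) = (n + 1) * (2 * n + 1) := by
    rw [mul_one, Nat.choose_two_right, mul_assoc, Nat.mul_div_cancel_left _ two_pos]
    rfl
  have hsign : (-1 : R) ^ (n + 1) * (-1) ^ n = -1 := by
    rw [pow_succ, mul_right_comm, ← mul_pow]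
    simp
  have hcoeff := congrArg (coeff · 1) hpow
  simp only [coeff_antidiagonalPoly, coeff_C_mul, coeff_X_sub_C_pow, hchoose, Nat.choose_one_right,
    Nat.add_sub_cancel, ← mul_assoc, hsign] at hcoeff
  push_cast at hcoeff hA
  exact hA (by linear_combination -hcoeff)

end IsDomain

lemma four_mul_sq_sub_one_div_four_add_one {n : ℕ} (hn : Odd n) :
    4 * ((n ^ 2 - 1) / 4) + 1 = n ^ 2 := by
  have hdvd : 4 ∣ n ^ 2 - 1 := Dvd.dvd.trans (by norm_num) (Nat.eight_dvd_sq_sub_one_of_odd hn)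
  rw [Nat.mul_div_cancel' hdvd, Nat.sub_add_cancel (Nat.pow_pos hn.pos)]

lemma mul_sub_one_mul_two_mul_add_one_ne_zero {R : Type*} [CommRing R] {a : R}
    (ha : 4 * a + 1 = 0) (h5 : (5 : R) ≠ 0) : a * (a - 1) * (2 * a + 1) ≠ 0 := fun h =>
  h5 (by linear_combination 32 * h + (-16 * a ^ 2 + 12 * a + 5) * ha)

theorem stmt9_general (p : ℕ) [Fact p.Prime] (h2 : p ≠ 2) (h5 : p ≠ 5) :
    ∃ t₀ : AlgebraicClosure (ZMod p),
      t₀ ≠ 0 ∧ t₀ ≠ 1 ∧ t₀ ≠ -1 ∧ Polynomial.aeval t₀ (Bp p) = 0 := by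
  have hp : p.Prime := Fact.out
  have hA := congrArg (Nat.cast (R := AlgebraicClosure (ZMod p)))
    (four_mul_sq_sub_one_div_four_add_one (hp.odd_of_ne_two h2))
  push_cast [CharP.cast_eq_zero, zero_pow two_ne_zero] at hA
  have hfive : (5 : AlgebraicClosure (ZMod p)) ≠ 0 := fun h =>
    h5 ((Nat.prime_dvd_prime_iff_eq hp Nat.prime_five).1
      ((CharP.cast_eq_zero_iff (AlgebraicClosure (ZMod p)) p 5).1 (mod_cast h)))
  obtain ⟨s, hs, hs1⟩ := exists_mem_roots_antidiagonalPoly_ne_one (IsAlgClosed.splits _)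
    (mul_sub_one_mul_two_mul_add_one_ne_zero hA hfive)
  obtain ⟨t, rfl⟩ := IsAlgClosed.exists_pow_nat_eq s two_pos
  have hBt : aeval t (Bp p) = 0 := (aeval_Bp p t).trans (isRoot_of_mem_roots hs)
  refine ⟨t, ?_, ?_, ?_, hBt⟩
  · rintro rfl
    simp [aeval_Bp, eval_zero_antidiagonalPoly] at hBt
  all_goals
    rintro rfl
    simp at hs1

theorem stmt9 (p : ℕ) [Fact p.Prime] (hp : p % 4 = 3) :
    ∃ t₀ : AlgebraicClosure (ZMod p),
      t₀ ≠ 0 ∧ t₀ ≠ 1 ∧ t₀ ≠ -1 ∧ Polynomial.aeval t₀ (Bp p) = 0 :=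
  stmt9_general p (by omega) (by omega)
end

section
/- Let p be a prime with p ≡ 3 (mod 4) and A = (p²−1)/4. Then B(t) = b_p(t,−t) is not equal to the polynomial (1−t²)^A in 𝔽_p[t]. -/
open Polynomial

/-!
Compare the coefficients of `t ^ 2`: it is `-A` in `(1 - t ^ 2) ^ A` and `-A * (2 * A).choose 2` in
`B(t)`. Modulo `p` we have `4 * A = -1`, so `A` is a unit and `8 * (2 * A).choose 2 = 3`; equality
of the two coefficients would therefore force `8 = 3` modulo `p`, that is, `p ∣ 5`.
-/

theorem choose_two_mul_two_add_self (m : ℕ) : m.choose 2 * 2 + m = m * m := by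
  rw [Nat.choose_succ_right_eq, Nat.choose_one_right, ← Nat.mul_add_one]
  cases m <;> simp

section CommRing

variable {R : Type*} [CommRing R]

theorem coeff_X_sub_one_sq_mul_X_sq_sub_C_pow (a : R) (n : ℕ) :
    (((X - 1) ^ 2 * (X ^ 2 - C a)) ^ n).coeff (2 * n) =
      ∑ k ∈ Finset.range (n + 1), (n.choose k * (2 * n).choose (2 * k) : R) * (-a) ^ k := by
  have expansion : ((X - 1) ^ 2 * (X ^ 2 - C a)) ^ n =
      ∑ k ∈ Finset.range (n + 1),
        C (n.choose k * (-a) ^ k) * (X + C (-1)) ^ (2 * n) * X ^ (2 * (n - k)) := by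
    rw [mul_pow, ← pow_mul, sub_eq_neg_add (X ^ 2), add_pow, Finset.mul_sum]
    refine Finset.sum_congr rfl fun k _ ↦ ?_
    simp only [C_mul, C_pow, C_neg, C_1, map_natCast]
    ring
  rw [expansion, finsetSum_coeff]
  refine Finset.sum_congr rfl fun k hk ↦ ?_
  have hkn : k ≤ n := Finset.mem_range_succ_iff.1 hk
  have degree_eq : 2 * n - 2 * (n - k) = 2 * k := by lia
  have sign_eq : (-1 : R) ^ (2 * n - 2 * k) = 1 := by
    rw [← Nat.mul_sub, pow_mul, neg_one_sq, one_pow]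
  rw [coeff_mul_X_pow', if_pos (by lia), degree_eq, coeff_C_mul, coeff_X_add_C_pow, sign_eq]
  ring

theorem coeff_coeff_X_sub_one_sq_mul_X_sq_sub_C_X_sq_pow (n k : ℕ) :
    ((((X - 1 : R[X][X]) ^ 2 * (X ^ 2 - C (X ^ 2))) ^ n).coeff (2 * n)).coeff (2 * k) =
      ((-1) ^ k * n.choose k * (2 * n).choose (2 * k) : R) := by
  have coeff_term (j : ℕ) :
      ((n.choose j * (2 * n).choose (2 * j) : R[X]) * (-X ^ 2) ^ j).coeff (2 * k) =
        if k = j then ((-1) ^ j * n.choose j * (2 * n).choose (2 * j) : R) else 0 := by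
    have monomial_form : (n.choose j * (2 * n).choose (2 * j) : R[X]) * (-X ^ 2) ^ j =
        C ((-1) ^ j * n.choose j * (2 * n).choose (2 * j) : R) * X ^ (2 * j) := by
      simp only [C_mul, C_pow, C_neg, C_1, map_natCast]
      ring
    rw [monomial_form, coeff_C_mul_X_pow]
    simp only [mul_right_inj' two_ne_zero]
  rw [coeff_X_sub_one_sq_mul_X_sq_sub_C_pow, finsetSum_coeff,
    Finset.sum_congr rfl fun j _ ↦ coeff_term j, Finset.sum_ite_eq, ite_eq_left_iff]
  intro hk
  rw [Nat.choose_eq_zero_of_lt (by simpa using hk), Nat.cast_zero, mul_zero, zero_mul]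

theorem coeff_two_mul_one_sub_X_sq_pow (n k : ℕ) :
    ((1 - X ^ 2 : R[X]) ^ n).coeff (2 * k) = (-1) ^ k * n.choose k := by
  have substitution : (1 - X ^ 2 : R[X]) ^ n = expand R 2 (((1 + X) ^ n).comp (C (-1) * X)) := by
    simp [sub_eq_add_neg]
  rw [substitution, coeff_expand_mul' two_pos, comp_C_mul_X_coeff, coeff_one_add_X_pow, mul_comm]

theorem eight_mul_choose_two_eq_three_of_two_mul_add_one_eq_zero {m : ℕ}
    (hm : (2 * m + 1 : R) = 0) : (8 * m.choose 2 : R) = 3 := by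
  have choose_two_mul_two : (m.choose 2 * 2 + m : R) = m * m := by
    exact_mod_cast congrArg (Nat.cast (R := R)) (choose_two_mul_two_add_self m)
  linear_combination 4 * choose_two_mul_two + (2 * (m : R) - 3) * hm

end CommRing

theorem Bp_eq_coeff (p : ℕ) :
    Bp p = (((X - 1 : (ZMod p)[X][X]) ^ 2 * (X ^ 2 - C (X ^ 2))) ^ ((p ^ 2 - 1) / 4)).coeff
      (2 * ((p ^ 2 - 1) / 4)) := by
  rw [Bp, bp, ← RingHom.coe_coe, ← coeff_map]
  congr 1
  simp only [Polynomial.map_pow, Polynomial.map_mul, Polynomial.map_sub, map_X, Polynomial.map_one,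
    map_C, RingHom.coe_coe, MvPolynomial.aeval_X, Matrix.cons_val_zero, Matrix.cons_val_one,
    C_neg, C_pow]
  ring

theorem coeff_two_mul_Bp (p k : ℕ) :
    (Bp p).coeff (2 * k) = ((-1) ^ k * ((p ^ 2 - 1) / 4).choose k *
      (2 * ((p ^ 2 - 1) / 4)).choose (2 * k) : ZMod p) := by
  rw [Bp_eq_coeff, coeff_coeff_X_sub_one_sq_mul_X_sq_sub_C_X_sq_pow]

theorem four_mul_sq_sub_one_div_four_add_one_of_odd {m : ℕ} (hm : Odd m) :
    4 * ((m ^ 2 - 1) / 4) + 1 = m ^ 2 := by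
  have four_dvd : 4 ∣ m ^ 2 - 1 := dvd_trans (by norm_num) (Nat.eight_dvd_sq_sub_one_of_odd hm)
  rw [Nat.mul_div_cancel' four_dvd, Nat.sub_add_cancel (Nat.one_le_pow _ _ hm.pos)]

theorem stmt11_general (p : ℕ) (hp : Odd p) (hp5 : ¬ p ∣ 5) (A : ℕ) (hA : A = (p ^ 2 - 1) / 4) :
    Bp p ≠ (1 - X ^ 2) ^ A := by
  intro hB
  have four_mul_A : (4 * A + 1 : ZMod p) = 0 := by
    have : ((4 * A + 1 : ℕ) : ZMod p) = (p ^ 2 : ℕ) := by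
      rw [hA, four_mul_sq_sub_one_div_four_add_one_of_odd hp]
    simpa using this
  have eight_mul_choose : (8 * (2 * A).choose 2 : ZMod p) = 3 :=
    eight_mul_choose_two_eq_three_of_two_mul_add_one_eq_zero <| by
      push_cast; linear_combination four_mul_A
  have coeff_two : (A * (2 * A).choose 2 : ZMod p) = A := by
    have := congrArg (coeff · (2 * 1)) hB
    simp only [coeff_two_mul_Bp, coeff_two_mul_one_sub_X_sq_pow, ← hA] at this
    simpa using this
  have choose_eq_one : ((2 * A).choose 2 : ZMod p) = 1 := by
    linear_combination ((2 * A).choose 2 - 1) * four_mul_A - 4 * coeff_two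
  have five_eq_zero : ((5 : ℕ) : ZMod p) = 0 := by
    push_cast
    linear_combination eight_mul_choose - 8 * choose_eq_one
  exact hp5 ((ZMod.natCast_eq_zero_iff 5 p).1 five_eq_zero)

theorem stmt11 (p : ℕ) [Fact p.Prime] (hp : p % 4 = 3) (A : ℕ) (hA : A = (p ^ 2 - 1) / 4) :
    Bp p ≠ (1 - X ^ 2) ^ A := by
  have not_dvd_five : ¬ p ∣ 5 := by rw [Nat.prime_dvd_prime_iff_eq Fact.out Nat.prime_five]; lia
  exact stmt11_general p (Nat.odd_iff.2 (by lia)) not_dvd_five A hA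
end
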